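/- Let M and N be weight sequences satisfying m_k^{1/k} → ∞ and n_k^{1/k} → ∞, where m_k := M_k/k! and n_k := N_k/k!, and suppose C := mg(M,N) < ∞. Let ε > 0, let g be holomorphic on Ω_ε and continuous on its closure, and assume there are constants L, a_1, a_2 > 0 such that sup_{z∈Ω_ε} |g(z)| ≤ L and sup_{x∈[-1,1]} |g(x)| ≤ a_1·h_m(a_2·ε). Then, with a_3 := max{a_1, L} and a_4 := e·C·a_2, one has sup_{z∈Ω_{ε/2}} |g(z)| ≤ a_3·h_n(a_4·ε). -/

import Mathlib

open Filter Set Asymptotics MeasureTheory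

noncomputable section

/-- `M` is a weight sequence: `M 0 = 1`, positive, `M 1 ≥ 1`, log-convex and
`M k ^ (1/k) → ∞`. -/
def IsWeightSeq (M : ℕ → ℝ) : Prop :=
  M 0 = 1 ∧ (∀ k, 0 < M k) ∧ 1 ≤ M 1 ∧
    (∀ k : ℕ, 1 ≤ k → M k ^ 2 ≤ M (k - 1) * M (k + 1)) ∧
    Tendsto (fun k : ℕ => M k ^ (1 / (k : ℝ))) atTop atTop

/-- The sequence `m k = M k / k!`. -/
def mseq (M : ℕ → ℝ) : ℕ → ℝ := fun k => M k / (Nat.factorial k : ℝ)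

/-- Log-convexity of a sequence. -/
def LogConvexSeq (m : ℕ → ℝ) : Prop := ∀ k : ℕ, 1 ≤ k → m k ^ 2 ≤ m (k - 1) * m (k + 1)

/-- `m k ^ (1/k) → ∞`. -/
def RootTendsToInfty (m : ℕ → ℝ) : Prop :=
  Tendsto (fun k : ℕ => m k ^ (1 / (k : ℝ))) atTop atTop

/-- Moderate growth of a sequence. -/
def ModerateGrowth (M : ℕ → ℝ) : Prop :=
  ∃ C : ℝ, 0 < C ∧ ∀ j k : ℕ, M (j + k) ≤ C ^ (j + k) * M j * M k

/-- Derivation closedness of a sequence. -/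
def DerivClosed (M : ℕ → ℝ) : Prop :=
  ∃ C : ℝ, 0 < C ∧ ∀ k : ℕ, M (k + 1) ≤ C ^ (k + 1) * M k

/-- Non-quasianalyticity: `∑_{k≥1} M (k-1) / M k = ∑_{k≥1} 1/μ_k < ∞`. -/
def NonQuasianalytic (M : ℕ → ℝ) : Prop := Summable fun k : ℕ => M k / M (k + 1)

/-- Quasianalyticity: `∑_{k≥1} 1/μ_k = ∞`. -/
def Quasianalytic (M : ℕ → ℝ) : Prop := ¬ NonQuasianalytic M

/-- The associated function `h_m (t) = inf_k m k * t ^ k`. -/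
def hFun (m : ℕ → ℝ) (t : ℝ) : ℝ := ⨅ k : ℕ, m k * t ^ k

/-- `Γ̄_m (t) = min {k | h_m t = m k * t ^ k}`. -/
def GammaBar (m : ℕ → ℝ) (t : ℝ) : ℕ := sInf {k : ℕ | hFun m t = m k * t ^ k}

/-- `Γ̲_m (t) = min {k | m (k+1) / m k ≥ 1 / t}`. -/
def GammaLow (m : ℕ → ℝ) (t : ℝ) : ℕ := sInf {k : ℕ | 1 / t ≤ m (k + 1) / m k}

/-- The set whose supremum is `mg (M, N)`. -/
def mgSet (M N : ℕ → ℝ) : Set ℝ :=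
  {x | ∃ j k : ℕ, 1 ≤ j + k ∧ x = (M (j + k) / (N j * N k)) ^ (1 / (j + k : ℝ))}

/-- `mg (M, N) = sup_{j+k ≥ 1} (M (j+k) / (N j * N k)) ^ (1/(j+k))`. -/
def mg (M N : ℕ → ℝ) : ℝ := sSup (mgSet M N)

/-- `mg (M, N) < ∞`. -/
def MgFinite (M N : ℕ → ℝ) : Prop := BddAbove (mgSet M N)

/-- A weight sequence is regular: `m k ^ (1/k) → ∞`, derivation closed, and
`Γ̄_m (C t) ≤ Γ̲_m t` for some `C ≥ 1`. -/
def RegularWS (M : ℕ → ℝ) : Prop :=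
  RootTendsToInfty (mseq M) ∧ DerivClosed M ∧
    ∃ C : ℝ, 1 ≤ C ∧ ∀ t : ℝ, 0 < t → GammaBar (mseq M) (C * t) ≤ GammaLow (mseq M) t

/-- `f` is of class `E^{M}` (Roumieu) on the open set `U`. -/
def RoumieuOn {E : Type*} [NormedAddCommGroup E] [NormedSpace ℝ E]
    (M : ℕ → ℝ) (f : E → ℂ) (U : Set E) : Prop :=
  ContDiffOn ℝ (⊤ : ℕ∞) f U ∧
    ∀ V : Set E, IsOpen V → IsCompact (closure V) → closure V ⊆ U →
      ∃ C σ : ℝ, 0 < C ∧ 0 < σ ∧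
        ∀ x ∈ V, ∀ k : ℕ, ‖iteratedFDerivWithin ℝ k f U x‖ ≤ C * σ ^ k * M k

/-- `f` is of class `E^{(M)}` (Beurling) on the open set `U`. -/
def BeurlingOn {E : Type*} [NormedAddCommGroup E] [NormedSpace ℝ E]
    (M : ℕ → ℝ) (f : E → ℂ) (U : Set E) : Prop :=
  ContDiffOn ℝ (⊤ : ℕ∞) f U ∧
    ∀ V : Set E, IsOpen V → IsCompact (closure V) → closure V ⊆ U →
      ∀ σ : ℝ, 0 < σ → ∃ C : ℝ, 0 < C ∧
        ∀ x ∈ V, ∀ k : ℕ, ‖iteratedFDerivWithin ℝ k f U x‖ ≤ C * σ ^ k * M k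

/-- A weight matrix: a nonempty, pointwise totally ordered family of weight sequences. -/
def IsWeightMatrix (W : Set (ℕ → ℝ)) : Prop :=
  W.Nonempty ∧ (∀ M ∈ W, IsWeightSeq M) ∧
    ∀ M ∈ W, ∀ N ∈ W, (∀ k, M k ≤ N k) ∨ (∀ k, N k ≤ M k)

/-- R-regularity of a weight matrix. -/
def RRegular (W : Set (ℕ → ℝ)) : Prop :=
  (∀ M ∈ W, RootTendsToInfty (mseq M)) ∧
    (∀ M ∈ W, ∃ N ∈ W, ∃ C : ℝ, 1 ≤ C ∧ ∀ j : ℕ, M (j + 1) ≤ C ^ (j + 1) * N j) ∧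
    (∀ M ∈ W, ∃ N ∈ W, ∃ C : ℝ, 1 ≤ C ∧
      ∀ t : ℝ, 0 < t → GammaBar (mseq N) (C * t) ≤ GammaLow (mseq M) t)

/-- B-regularity of a weight matrix. -/
def BRegular (W : Set (ℕ → ℝ)) : Prop :=
  (∀ M ∈ W, RootTendsToInfty (mseq M)) ∧
    (∀ M ∈ W, ∃ N ∈ W, ∃ C : ℝ, 1 ≤ C ∧ ∀ j : ℕ, N (j + 1) ≤ C ^ j * M j) ∧
    (∀ M ∈ W, ∃ N ∈ W, ∃ C : ℝ, 1 ≤ C ∧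
      ∀ t : ℝ, 0 < t → GammaBar (mseq M) (C * t) ≤ GammaLow (mseq N) t)

/-- R-moderate growth of a weight matrix. -/
def RModerateGrowth (W : Set (ℕ → ℝ)) : Prop := ∀ M ∈ W, ∃ N ∈ W, MgFinite M N

/-- B-moderate growth of a weight matrix. -/
def BModerateGrowth (W : Set (ℕ → ℝ)) : Prop := ∀ M ∈ W, ∃ N ∈ W, MgFinite N M

/-- `f` is of class `E^{W}` (Roumieu, weight matrix) on the open set `U`. -/
def MatrixRoumieuOn {E : Type*} [NormedAddCommGroup E] [NormedSpace ℝ E]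
    (W : Set (ℕ → ℝ)) (f : E → ℂ) (U : Set E) : Prop :=
  ContDiffOn ℝ (⊤ : ℕ∞) f U ∧
    ∀ V : Set E, IsOpen V → IsCompact (closure V) → closure V ⊆ U →
      ∃ M ∈ W, ∃ C σ : ℝ, 0 < C ∧ 0 < σ ∧
        ∀ x ∈ V, ∀ k : ℕ, ‖iteratedFDerivWithin ℝ k f U x‖ ≤ C * σ ^ k * M k

/-- `f` is of class `E^{(W)}` (Beurling, weight matrix) on the open set `U`. -/
def MatrixBeurlingOn {E : Type*} [NormedAddCommGroup E] [NormedSpace ℝ E]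
    (W : Set (ℕ → ℝ)) (f : E → ℂ) (U : Set E) : Prop :=
  ContDiffOn ℝ (⊤ : ℕ∞) f U ∧
    ∀ V : Set E, IsOpen V → IsCompact (closure V) → closure V ⊆ U →
      ∀ M ∈ W, ∀ σ : ℝ, 0 < σ → ∃ C : ℝ, 0 < C ∧
        ∀ x ∈ V, ∀ k : ℕ, ‖iteratedFDerivWithin ℝ k f U x‖ ≤ C * σ ^ k * M k

/-- `ω` is a weight function. -/
def IsWeightFunction (ω : ℝ → ℝ) : Prop :=
  ContinuousOn ω (Ici 0) ∧ MonotoneOn ω (Ici 0) ∧ (∀ t ∈ Ici (0 : ℝ), 0 ≤ ω t) ∧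
    ((fun t => ω (2 * t)) =O[atTop] ω) ∧ (ω =o[atTop] fun t : ℝ => t) ∧
    ((fun t => Real.log t) =o[atTop] ω) ∧ ConvexOn ℝ (Ici 0) fun t => ω (Real.exp t)

/-- The Young conjugate `φ*_ω (s) = sup_{t ≥ 0} (s t - ω (e^t))`. -/
def phiStar (ω : ℝ → ℝ) (s : ℝ) : ℝ := sSup ((fun t => s * t - ω (Real.exp t)) '' Ici 0)

/-- Non-quasianalyticity of a weight function. -/
def NonQuasianalyticW (ω : ℝ → ℝ) : Prop := IntegrableOn (fun t => ω t / t ^ 2) (Ici 1)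

/-- `f` is of class `E^{ω}` (Roumieu) on the open set `U`. -/
def OmegaRoumieuOn {E : Type*} [NormedAddCommGroup E] [NormedSpace ℝ E]
    (ω : ℝ → ℝ) (f : E → ℂ) (U : Set E) : Prop :=
  ContDiffOn ℝ (⊤ : ℕ∞) f U ∧
    ∀ V : Set E, IsOpen V → IsCompact (closure V) → closure V ⊆ U →
      ∃ C ρ : ℝ, 0 < C ∧ 0 < ρ ∧
        ∀ x ∈ V, ∀ k : ℕ,
          ‖iteratedFDerivWithin ℝ k f U x‖ ≤ C * Real.exp (phiStar ω (ρ * k) / ρ)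

/-- `f` is of class `E^{(ω)}` (Beurling) on the open set `U`. -/
def OmegaBeurlingOn {E : Type*} [NormedAddCommGroup E] [NormedSpace ℝ E]
    (ω : ℝ → ℝ) (f : E → ℂ) (U : Set E) : Prop :=
  ContDiffOn ℝ (⊤ : ℕ∞) f U ∧
    ∀ V : Set E, IsOpen V → IsCompact (closure V) → closure V ⊆ U →
      ∀ ρ : ℝ, 0 < ρ → ∃ C : ℝ, 0 < C ∧
        ∀ x ∈ V, ∀ k : ℕ,
          ‖iteratedFDerivWithin ℝ k f U x‖ ≤ C * Real.exp (phiStar ω (ρ * k) / ρ)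

/-- The open ellipse `Ω_ε` with vertices `± cosh ε` and co-vertices `± i sinh ε`. -/
def OmegaE (ε : ℝ) : Set ℂ :=
  {z : ℂ | (z.re / Real.cosh ε) ^ 2 + (z.im / Real.sinh ε) ^ 2 < 1}

/-- The sequence space `Λ^{M}`. -/
def Lambda (M : ℕ → ℝ) : Set (ℕ → ℂ) :=
  {c | ∃ ρ : ℝ, 0 < ρ ∧ ∃ C : ℝ, ∀ k, ‖c k‖ ≤ C * ρ ^ k * M k}

/-- `L(M)`: all non-quasianalytic weight sequences `N ≥ M` with `n = N/k!` log-convex. -/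
def LM (M : ℕ → ℝ) : Set (ℕ → ℝ) :=
  {N | IsWeightSeq N ∧ NonQuasianalytic N ∧ (∀ k, M k ≤ N k) ∧ LogConvexSeq (mseq N)}

/-- A quasianalytic weight sequence `M` is intersectable if `Λ^{M} = ⋂_{N ∈ L(M)} Λ^{N}`. -/
def Intersectable (M : ℕ → ℝ) : Prop := Lambda M = ⋂ N ∈ LM M, Lambda N


lemma aux_cosh_re (w : ℂ) : (Complex.cosh w).re = Real.cosh w.re * Real.cos w.im := by
  conv_lhs => rw [← Complex.re_add_im w]
  rw [Complex.cosh_add, Complex.cosh_mul_I, Complex.sinh_mul_I]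
  rw [← Complex.ofReal_cosh, ← Complex.ofReal_sinh, ← Complex.ofReal_cos, ← Complex.ofReal_sin]
  simp only [Complex.add_re, Complex.add_im, Complex.mul_re, Complex.mul_im, Complex.ofReal_re,
    Complex.ofReal_im, Complex.I_re, Complex.I_im]
  ring

lemma aux_cosh_im (w : ℂ) : (Complex.cosh w).im = Real.sinh w.re * Real.sin w.im := by
  conv_lhs => rw [← Complex.re_add_im w]
  rw [Complex.cosh_add, Complex.cosh_mul_I, Complex.sinh_mul_I]
  rw [← Complex.ofReal_cosh, ← Complex.ofReal_sinh, ← Complex.ofReal_cos, ← Complex.ofReal_sin]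
  simp only [Complex.add_re, Complex.add_im, Complex.mul_re, Complex.mul_im, Complex.ofReal_re,
    Complex.ofReal_im, Complex.I_re, Complex.I_im]
  ring

lemma aux_maps {ε : ℝ} {w : ℂ} (h0 : 0 ≤ w.re) (h1 : w.re < ε) :
    Complex.cosh w ∈ OmegaE ε := by
  have hs : Real.sinh w.re < Real.sinh ε := Real.sinh_lt_sinh.2 h1
  have hs0 : 0 ≤ Real.sinh w.re := Real.sinh_nonneg_iff.2 h0
  have hc : Real.cosh w.re < Real.cosh ε :=
    Real.cosh_lt_cosh.2 (by rw [abs_of_nonneg h0, abs_of_nonneg (h0.trans h1.le)]; exact h1)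
  have hc0 : 0 < Real.cosh w.re := Real.cosh_pos _
  have hA : (Real.cosh w.re / Real.cosh ε) ^ 2 < 1 := by
    apply pow_lt_one₀ (by positivity) _ (by norm_num)
    rw [div_lt_one (Real.cosh_pos _)]; exact hc
  have hB : (Real.sinh w.re / Real.sinh ε) ^ 2 < 1 := by
    apply pow_lt_one₀ (div_nonneg hs0 (hs0.trans hs.le)) _ (by norm_num)
    rw [div_lt_one (hs0.trans_lt hs)]; exact hs
  simp only [OmegaE, mem_ofPred_eq, aux_cosh_re, aux_cosh_im]
  rw [mul_div_right_comm, mul_div_right_comm, mul_pow, mul_pow]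
  have := Real.sin_sq_add_cos_sq w.im
  have hq := max_lt hA hB
  nlinarith [mul_le_mul_of_nonneg_right (le_max_left ((Real.cosh w.re / Real.cosh ε) ^ 2)
      ((Real.sinh w.re / Real.sinh ε) ^ 2)) (sq_nonneg (Real.cos w.im)),
    mul_le_mul_of_nonneg_right (le_max_right ((Real.cosh w.re / Real.cosh ε) ^ 2)
      ((Real.sinh w.re / Real.sinh ε) ^ 2)) (sq_nonneg (Real.sin w.im))]

lemma aux_re_lt {r : ℝ} (hr : 0 < r) {w : ℂ}
    (h : Complex.cosh w ∈ OmegaE r) : w.re < r := by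
  by_contra! h1
  have h0 : 0 ≤ w.re := hr.le.trans h1
  have hs : Real.sinh r ≤ Real.sinh w.re := Real.sinh_le_sinh.2 h1
  have hs0 : 0 < Real.sinh r := Real.sinh_pos_iff.2 hr
  have hc : Real.cosh r ≤ Real.cosh w.re :=
    Real.cosh_le_cosh.2 (by rw [abs_of_nonneg h0, abs_of_nonneg hr.le]; exact h1)
  have hA : 1 ≤ (Real.cosh w.re / Real.cosh r) ^ 2 := by
    apply one_le_pow₀
    rw [one_le_div (Real.cosh_pos _)]; exact hc
  have hB : 1 ≤ (Real.sinh w.re / Real.sinh r) ^ 2 := by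
    apply one_le_pow₀
    rw [one_le_div hs0]; exact hs
  simp only [OmegaE, mem_ofPred_eq, aux_cosh_re, aux_cosh_im] at h
  rw [mul_div_right_comm, mul_div_right_comm, mul_pow, mul_pow] at h
  have := Real.sin_sq_add_cos_sq w.im
  nlinarith [sq_nonneg (Real.sin w.im), sq_nonneg (Real.cos w.im)]

lemma aux_surj (z : ℂ) : ∃ w : ℂ, 0 ≤ w.re ∧ Complex.cosh w = z := by
  obtain ⟨v, hv⟩ := Complex.cos_surjective z
  rw [← Complex.cosh_mul_I] at hv
  rcases le_total 0 (v * Complex.I).re with h | h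
  · exact ⟨_, h, hv⟩
  · exact ⟨-(v * Complex.I), by rw [Complex.neg_re]; linarith, by rw [Complex.cosh_neg, hv]⟩

lemma aux_bdd {m : ℕ → ℝ} {t : ℝ} (hm : ∀ k, 0 ≤ m k) (ht : 0 ≤ t) :
    BddBelow (range fun k : ℕ => m k * t ^ k) :=
  ⟨0, by rintro _ ⟨k, rfl⟩; exact mul_nonneg (hm k) (pow_nonneg ht k)⟩

lemma aux_mg {M N : ℕ → ℝ} (hM : IsWeightSeq M) (hN : IsWeightSeq N) (hfin : MgFinite M N)
    (k : ℕ) : M (k + k) ≤ (mg M N ^ k * N k) ^ 2 := by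
  have hNk := hN.2.1 k
  rcases Nat.eq_zero_or_pos k with rfl | hk
  · simp [hM.1, hN.1]
  have hle : (M (k + k) / (N k * N k)) ^ (1 / (k + k : ℝ)) ≤ mg M N :=
    le_csSup hfin ⟨k, k, by omega, rfl⟩
  have hpos : 0 < M (k + k) / (N k * N k) := div_pos (hM.2.1 _) (by positivity)
  have h2 := pow_le_pow_left₀ (Real.rpow_nonneg hpos.le _) hle (k + k)
  rw [← Real.rpow_natCast, ← Real.rpow_mul hpos.le] at h2
  have : (1 / (k + k : ℝ)) * ((k + k : ℕ) : ℝ) = 1 := by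
    push_cast
    have : (k : ℝ) ≠ 0 := by positivity
    field_simp
  rw [this, Real.rpow_one, div_le_iff₀ (by positivity)] at h2
  calc _ ≤ _ := h2
    _ = _ := by ring

lemma aux_mg_nonneg {M N : ℕ → ℝ} (hM : IsWeightSeq M) (hN : IsWeightSeq N) : 0 ≤ mg M N := by
  apply Real.sSup_nonneg
  rintro _ ⟨j, k, _, rfl⟩
  exact Real.rpow_nonneg (div_nonneg (hM.2.1 _).le (mul_nonneg (hN.2.1 _).le (hN.2.1 _).le)) _

lemma aux_h {M N : ℕ → ℝ} (hM : IsWeightSeq M) (hN : IsWeightSeq N) (hfin : MgFinite M N)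
    {t : ℝ} (ht : 0 < t) :
    Real.sqrt (hFun (mseq M) t) ≤ hFun (mseq N) (Real.exp 1 * mg M N * t) := by
  have hC := aux_mg_nonneg hM hN
  have hNpos := hN.2.1
  have hmM : ∀ k, 0 ≤ mseq M k := fun k => div_nonneg (hM.2.1 k).le (by positivity)
  refine le_ciInf fun k => ?_
  have hNk := hNpos k
  apply Real.sqrt_le_iff.2
  refine ⟨by unfold mseq; positivity, ?_⟩
  have h1 : hFun (mseq M) t ≤ mseq M (k + k) * t ^ (k + k) := ciInf_le (aux_bdd hmM ht.le) (k + k)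
  have hmg := aux_mg hM hN hfin k
  have hfac : ((k.factorial : ℝ)) ^ 2 ≤ ((k + k).factorial : ℝ) := by
    rw [sq]
    exact_mod_cast Nat.le_of_dvd (Nat.factorial_pos _) (Nat.factorial_mul_factorial_dvd_factorial_add k k)
  have he : (1 : ℝ) ≤ Real.exp 1 ^ k := one_le_pow₀ (Real.one_le_exp zero_le_one)
  calc hFun (mseq M) t ≤ mseq M (k + k) * t ^ (k + k) := h1
    _ ≤ ((mg M N ^ k * N k) ^ 2 / (k.factorial : ℝ) ^ 2) * t ^ (k + k) := by
        unfold mseq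
        gcongr
    _ = (1 * (N k / k.factorial * (mg M N * t) ^ k)) ^ 2 := by
        rw [mul_pow (mg M N) t]; field_simp; ring
    _ ≤ (Real.exp 1 ^ k * (N k / k.factorial * (mg M N * t) ^ k)) ^ 2 := by
        gcongr
    _ = _ := by unfold mseq; rw [mul_assoc (Real.exp 1), mul_pow (Real.exp 1)]; ring


/-- a Hadamard-three-lines estimate on the ellipses `Ω_ε`: if `g` is
holomorphic on `Ω_ε`, continuous on its closure, bounded by `L` on `Ω_ε` and by
`a₁ h_m (a₂ ε)` on `[-1,1]`, then `g` is bounded by `max a₁ L * h_n (e C a₂ ε)` on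
`Ω_{ε/2}`, where `C = mg (M, N)`. -/
theorem statement12 (M N : ℕ → ℝ) (hM : IsWeightSeq M) (hN : IsWeightSeq N)
    (hm : RootTendsToInfty (mseq M)) (hn : RootTendsToInfty (mseq N))
    (hfin : MgFinite M N) (ε : ℝ) (hε : 0 < ε)
    (g : ℂ → ℂ) (hgd : DifferentiableOn ℂ g (OmegaE ε))
    (hgc : ContinuousOn g (closure (OmegaE ε)))
    (L a₁ a₂ : ℝ) (hL : 0 < L) (ha₁ : 0 < a₁) (ha₂ : 0 < a₂)
    (hbound : ∀ z ∈ OmegaE ε, ‖g z‖ ≤ L)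
    (hsmall : ∀ x ∈ Icc (-1 : ℝ) 1, ‖g (x : ℂ)‖ ≤ a₁ * hFun (mseq M) (a₂ * ε)) :
    ∀ z ∈ OmegaE (ε / 2),
      ‖g z‖ ≤ max a₁ L * hFun (mseq N) (Real.exp 1 * mg M N * a₂ * ε) := by
  intro z hz
  have ht : 0 < a₂ * ε := by positivity
  have hmM : ∀ k, 0 ≤ mseq M k := fun k => div_nonneg (hM.2.1 k).le (by positivity)
  set h := hFun (mseq M) (a₂ * ε) with hh
  have h0 : 0 ≤ h := le_ciInf fun k => mul_nonneg (hmM k) (by positivity)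
  have h1 : h ≤ 1 := by
    have : h ≤ mseq M 0 * (a₂ * ε) ^ 0 := ciInf_le (aux_bdd hmM ht.le) 0
    simpa [mseq, hM.1] using this
  have hfinal := aux_h hM hN hfin ht
  rw [← hh, ← mul_assoc] at hfinal
  obtain ⟨w, hw0, rfl⟩ := aux_surj z
  have hw1 : w.re < ε / 2 := aux_re_lt (by positivity) hz
  have hcl : ∀ z ∈ closure (OmegaE ε), ‖g z‖ ≤ L := by
    intro z hz
    have := hgc.norm.image_closure (s := OmegaE ε)
    have h2 := this (mem_image_of_mem _ hz)
    have h3 : closure ((fun x => ‖g x‖) '' OmegaE ε) ⊆ Iic L :=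
      closure_minimal (by rintro _ ⟨x, hx, rfl⟩; exact hbound x hx) isClosed_Iic
    exact h3 h2
  have hmaps : MapsTo Complex.cosh (Complex.HadamardThreeLines.verticalStrip 0 ε) (OmegaE ε) :=
    fun v hv => aux_maps hv.1.le hv.2
  have hclos : closure (Complex.HadamardThreeLines.verticalStrip 0 ε) =
      Complex.HadamardThreeLines.verticalClosedStrip 0 ε := by
    rw [Complex.HadamardThreeLines.verticalStrip, Complex.HadamardThreeLines.verticalClosedStrip,
      ← closure_Ioo hε.ne, Complex.closure_preimage_re]
  have hmapsc : MapsTo Complex.cosh (Complex.HadamardThreeLines.verticalClosedStrip 0 ε)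
      (closure (OmegaE ε)) := by
    rw [← hclos]
    exact hmaps.closure Complex.continuous_cosh
  have hd : DiffContOnCl ℂ (g ∘ Complex.cosh) (Complex.HadamardThreeLines.verticalStrip 0 ε) :=
    DiffContOnCl.comp ⟨hgd, hgc⟩ Complex.differentiable_cosh.diffContOnCl hmaps
  have key := Complex.HadamardThreeLines.norm_le_interp_of_mem_verticalClosedStrip'
    (f := g ∘ Complex.cosh) (z := w) (a := a₁ * h) (b := L) hε ⟨hw0, by linarith⟩ hd
    ⟨L, by rintro _ ⟨v, hv, rfl⟩; exact hcl _ (hmapsc hv)⟩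
    (by
      intro v hv
      have hv' : v.re = 0 := hv
      have hval : Complex.cosh v = ((Real.cos v.im : ℝ) : ℂ) := by
        apply Complex.ext
        · rw [aux_cosh_re, Complex.ofReal_re, hv', Real.cosh_zero, one_mul]
        · rw [aux_cosh_im, Complex.ofReal_im]; simp [hv']
      simp only [Function.comp, hval]
      exact hsmall _ ⟨Real.neg_one_le_cos _, Real.cos_le_one _⟩)
    (by
      intro v hv
      have hv' : v.re = ε := hv
      exact hcl _ (hmapsc ⟨by rw [hv']; exact hε.le, hv'.le⟩))
  simp only [sub_zero, Function.comp] at key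
  set θ := w.re / ε with hθ
  have hθ0 : 0 ≤ θ := by positivity
  have hθ1 : θ ≤ 1 / 2 := by
    rw [hθ, div_le_iff₀ hε]; linarith
  have hmax : 0 < max a₁ L := lt_max_of_lt_left ha₁
  calc ‖g (Complex.cosh w)‖ ≤ (a₁ * h) ^ (1 - θ) * L ^ θ := key
    _ ≤ (max a₁ L * h) ^ (1 - θ) * (max a₁ L) ^ θ := by
        gcongr
        · linarith
        · exact le_max_left _ _
        · exact le_max_right _ _
    _ = max a₁ L * h ^ (1 - θ) := by
        rw [Real.mul_rpow hmax.le h0, mul_right_comm, ← Real.rpow_add hmax]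
        simp
    _ ≤ max a₁ L * Real.sqrt h := by
        rw [Real.sqrt_eq_rpow]
        gcongr ?_ * ?_
        exact Real.rpow_le_rpow_of_exponent_ge' h0 h1 (by norm_num) (by linarith)
    _ ≤ _ := by gcongr
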